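/- arXiv:1604.04741 — 2 statements merged into one kernel-verified Lean document; each statement's English description precedes it below -/
import Mathlib

section
/- Let b > 0, T > 0, and 0 < A ≤ 1 be real numbers, and define f : (0, A) → ℝ by f(x) = x·log(x/b) − b·log x − T·log(A − x) + (A − x)·log((A − x)/T). Then f is strictly convex on the interval (0, A). -/
open Real

/-! Each of the pairs `(x, b)` and `(A - x, T)` contributes a function `y ↦ y log (y / c) - c log y`,
a strictly convex function of `y > 0` because `y log y` is strictly convex, `y log c` is linear and
`log` is concave. The reflection `x ↦ A - x` is affine and injective, so it preserves strict
convexity. -/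

section AffineMap

variable {𝕜 E F β : Type*} [Ring 𝕜] [PartialOrder 𝕜] [AddCommGroup E] [AddCommGroup F]
  [AddCommMonoid β] [PartialOrder β] [Module 𝕜 E] [Module 𝕜 F] [SMul 𝕜 β]

theorem strictConvexOn_comp_affineMap {f : F → β} {s : Set F} (hf : StrictConvexOn 𝕜 s f)
    (g : E →ᵃ[𝕜] F) (hg : Function.Injective g) : StrictConvexOn 𝕜 (g ⁻¹' s) (f ∘ g) := by
  refine ⟨hf.1.affine_preimage g, fun x hx y hy hxy a b ha hb hab => ?_⟩
  simp only [Function.comp_apply, Convex.combo_affine_apply hab]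
  exact hf.2 hx hy (hg.ne hxy) ha hb hab

theorem strictConvexOn_comp_const_sub {f : E → β} {s : Set E} (hf : StrictConvexOn 𝕜 s f) (c : E) :
    StrictConvexOn 𝕜 ((c - ·) ⁻¹' s) fun x => f (c - x) :=
  strictConvexOn_comp_affineMap hf (AffineEquiv.constVSub 𝕜 c).toAffineMap
    (AffineEquiv.injective _)

end AffineMap

theorem strictConvexOn_mul_log_div {c : ℝ} (hc : c ≠ 0) :
    StrictConvexOn ℝ (Set.Ici 0) fun x => x * log (x / c) := by
  have linear_part : ConcaveOn ℝ (Set.Ici 0) fun x => x * log c :=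
    (LinearMap.mulRight ℝ (log c)).concaveOn (convex_Ici 0)
  refine (strictConvexOn_mul_log.sub_concaveOn linear_part).congr fun x _ => ?_
  rcases eq_or_ne x 0 with rfl | hx
  · simp
  · simp only [Pi.sub_apply, log_div hx hc, mul_sub]

theorem strictConvexOn_mul_log_div_sub_mul_log {c : ℝ} (hc : 0 < c) :
    StrictConvexOn ℝ (Set.Ioi 0) fun x => x * log (x / c) - c * log x :=
  ((strictConvexOn_mul_log_div hc.ne').subset Set.Ioi_subset_Ici_self (convex_Ioi 0)).sub_concaveOn
    (strictConcaveOn_log_Ioi.concaveOn.smul hc.le)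

theorem f_strictConvexOn_general {b T : ℝ} (hb : 0 < b) (hT : 0 < T) (A : ℝ) :
    StrictConvexOn ℝ (Set.Ioo 0 A) fun x =>
      x * log (x / b) - b * log x - T * log (A - x) + (A - x) * log ((A - x) / T) := by
  have left_term : StrictConvexOn ℝ (Set.Ioo 0 A) fun x => x * log (x / b) - b * log x :=
    (strictConvexOn_mul_log_div_sub_mul_log hb).subset Set.Ioo_subset_Ioi_self (convex_Ioo 0 A)
  have right_term : StrictConvexOn ℝ (Set.Ioo 0 A) fun x =>
      (A - x) * log ((A - x) / T) - T * log (A - x) :=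
    (strictConvexOn_comp_const_sub (strictConvexOn_mul_log_div_sub_mul_log hT) A).subset
      (fun _ hx => sub_pos.2 hx.2) (convex_Ioo 0 A)
  refine (left_term.add right_term).congr fun x _ => ?_
  simp only [Pi.add_apply]
  ring

/-- The one-dimensional function arising from the aggregated symmetric KL constraint,
`f x = x·log(x/b) − b·log x − T·log(A − x) + (A − x)·log((A − x)/T)`,
is strictly convex on the interval `(0, A)`. -/
theorem f_strictConvexOn
    (b T A : ℝ) (hb : 0 < b) (hT : 0 < T) (hA0 : 0 < A) (hA1 : A ≤ 1)
    (f : ℝ → ℝ)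
    (hf : ∀ x, f x = x * Real.log (x / b) - b * Real.log x -
        T * Real.log (A - x) + (A - x) * Real.log ((A - x) / T)) :
    StrictConvexOn ℝ (Set.Ioo 0 A) f := by
  simpa only [← hf] using f_strictConvexOn_general hb hT A
end

section
/- Let b > 0, T > 0, and 0 < A ≤ 1 be real numbers, and define f : (0, A) → ℝ by f(x) = x·log(x/b) − b·log x − T·log(A − x) + (A − x)·log((A − x)/T). Then for every real number c, the sublevel set {x ∈ (0, A) : f(x) ≤ c} is either empty or equal to a closed bounded interval [r₁, r₂] with 0 < r₁ ≤ r₂ < A. -/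
open Real

/-!
Write `g β x = x log (x / β) - β log x`, so that `f x = g b x + g T (A - x)` on `(0, A)`.
For `β > 0` the function `g β` is convex on `(0, ∞)`, since both `x log x` and `-log x` are, and
it tends to `+∞` at `0⁺`, where `-β log x` blows up and `x log (x / β)` tends to `0`. So `f` is
convex on `(0, A)` and tends to `+∞` at both endpoints: its sublevel sets stay away from the
endpoints, which makes them compact, and they are convex. A nonempty compact convex subset of `ℝ`
is a closed interval.
-/

open Set Filter Topology

theorem isCompact_setOf_mem_Ioo_and_le {α β : Type*} [LinearOrder α] [TopologicalSpace α]
    [OrderTopology α] [CompactIccSpace α] [LinearOrder β] [NoMaxOrder β] {f : α → β} {a b : α}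
    (hf : LowerSemicontinuousOn f (Ioo a b)) (hfa : Tendsto f (𝓝[>] a) atTop)
    (hfb : Tendsto f (𝓝[<] b) atTop) (c : β) : IsCompact {x ∈ Ioo a b | f x ≤ c} := by
  rcases lt_or_ge a b with hab | hba
  · obtain ⟨a', ha', gt_of_lt_a'⟩ :=
      (mem_nhdsGT_iff_exists_Ioo_subset' hab).1 (hfa.eventually_gt_atTop c)
    obtain ⟨b', hb', gt_of_b'_lt⟩ :=
      (mem_nhdsLT_iff_exists_Ioo_subset' hab).1 (hfb.eventually_gt_atTop c)
    have Icc_subset : Icc a' b' ⊆ Ioo a b := Icc_subset_Ioo ha' hb'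
    have sublevel_eq : {x ∈ Ioo a b | f x ≤ c} = Icc a' b' ∩ f ⁻¹' Iic c := by
      ext x
      refine ⟨fun ⟨hx, hxc⟩ ↦ ⟨⟨?_, ?_⟩, hxc⟩, fun ⟨hx, hxc⟩ ↦ ⟨Icc_subset hx, hxc⟩⟩
      · exact le_of_not_gt fun h ↦ hxc.not_gt (gt_of_lt_a' ⟨hx.1, h⟩)
      · exact le_of_not_gt fun h ↦ hxc.not_gt (gt_of_b'_lt ⟨h, hx.2⟩)
    rw [sublevel_eq]
    exact (hf.mono Icc_subset).isCompact_inter_preimage_Iic isCompact_Icc c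
  · simp [Ioo_eq_empty hba.not_gt]

theorem setOf_mem_Ioo_and_le_eq_empty_or_Icc {β : Type*} [LinearOrder β] [NoMaxOrder β]
    {f : ℝ → β} {a b : ℝ} (hf : QuasiconvexOn ℝ (Ioo a b) f)
    (hf_lsc : LowerSemicontinuousOn f (Ioo a b)) (hfa : Tendsto f (𝓝[>] a) atTop)
    (hfb : Tendsto f (𝓝[<] b) atTop) (c : β) :
    {x ∈ Ioo a b | f x ≤ c} = ∅ ∨
      ∃ r₁ r₂ : ℝ, a < r₁ ∧ r₁ ≤ r₂ ∧ r₂ < b ∧ {x ∈ Ioo a b | f x ≤ c} = Icc r₁ r₂ := by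
  refine (eq_empty_or_nonempty _).imp_right fun nonempty ↦ ?_
  have compact := isCompact_setOf_mem_Ioo_and_le hf_lsc hfa hfb c
  have sInf_mem := compact.sInf_mem nonempty
  have sSup_mem := compact.sSup_mem nonempty
  exact ⟨_, _, sInf_mem.1.1, csInf_le compact.bddBelow sSup_mem, sSup_mem.1.2,
    eq_Icc_of_connected_compact ⟨nonempty, (hf c).isPreconnected⟩ compact⟩

section Reflection

theorem convexOn_comp_const_sub {𝕜 E β : Type*} [Field 𝕜] [LinearOrder 𝕜] [AddCommGroup E]
    [Module 𝕜 E] [AddCommMonoid β] [PartialOrder β] [SMul 𝕜 β] {s : Set E} {ψ : E → β}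
    (hψ : ConvexOn 𝕜 s ψ) (a : E) :
    ConvexOn 𝕜 ((a - ·) ⁻¹' s) (fun x ↦ ψ (a - x)) :=
  hψ.comp_affineMap (AffineMap.const 𝕜 E a - AffineMap.id 𝕜 E)

theorem convexOn_Ioo_add_comp_const_sub {𝕜 β : Type*} [Field 𝕜] [LinearOrder 𝕜]
    [IsStrictOrderedRing 𝕜] [AddCommMonoid β] [PartialOrder β] [IsOrderedAddMonoid β]
    [DistribMulAction 𝕜 β] {φ ψ : 𝕜 → β} (hφ : ConvexOn 𝕜 (Ioi 0) φ)
    (hψ : ConvexOn 𝕜 (Ioi 0) ψ) (a : 𝕜) :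
    ConvexOn 𝕜 (Ioo 0 a) (fun x ↦ φ x + ψ (a - x)) := by
  have hψ_reflected : ConvexOn 𝕜 (Iio a) (fun x ↦ ψ (a - x)) := by
    simpa using convexOn_comp_const_sub hψ a
  exact (hφ.subset Ioo_subset_Ioi_self (convex_Ioo 0 a)).add
    (hψ_reflected.subset Ioo_subset_Iio_self (convex_Ioo 0 a))

variable {G H : Type*} [AddCommGroup G] [TopologicalSpace G] [AddCommGroup H] [LinearOrder H]
  [IsOrderedAddMonoid H] [TopologicalSpace H] [OrderTopology H] {φ ψ : G → H} {a : G}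

theorem tendsto_add_comp_const_sub_nhdsGT_zero [Preorder G] [ContinuousSub G]
    (hφ : Tendsto φ (𝓝[>] 0) atTop) (hψ : ContinuousAt ψ a) :
    Tendsto (fun x ↦ φ x + ψ (a - x)) (𝓝[>] 0) atTop := by
  have sub_tendsto : Tendsto (a - ·) (𝓝[>] 0) (𝓝 a) :=
    ((continuous_sub_left a).tendsto' 0 a (sub_zero a)).mono_left nhdsWithin_le_nhds
  exact hφ.atTop_add (hψ.tendsto.comp sub_tendsto)

theorem tendsto_add_comp_const_sub_nhdsLT [PartialOrder G] [IsOrderedAddMonoid G] [ContinuousSub G]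
    (hφ : ContinuousAt φ a) (hψ : Tendsto ψ (𝓝[>] 0) atTop) :
    Tendsto (fun x ↦ φ x + ψ (a - x)) (𝓝[<] a) atTop := by
  have sub_tendsto : Tendsto (a - ·) (𝓝[<] a) (𝓝[>] 0) :=
    tendsto_nhdsWithin_iff.2
      ⟨((continuous_sub_left a).tendsto' a 0 (sub_self a)).mono_left nhdsWithin_le_nhds,
        eventually_mem_nhdsWithin.mono fun _ hx ↦ sub_pos.2 hx⟩
  exact (hφ.tendsto.mono_left nhdsWithin_le_nhds).add_atTop (hψ.comp sub_tendsto)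

end Reflection

/-- The part depending on `x` of the symmetrised relative entropy
`x log (x / β) + β log (β / x)` of two masses `x` and `β`; the dropped constant is `β log β`. -/
noncomputable def symmKLTerm (β x : ℝ) : ℝ :=
  x * log (x / β) - β * log x

section SymmKLTerm

variable {β : ℝ}

theorem symmKLTerm_eq_mul_neg_log_add (hβ : β ≠ 0) (x : ℝ) :
    symmKLTerm β x = β * -log x + (x * log x - x * log β) := by
  rcases eq_or_ne x 0 with rfl | hx
  · simp [symmKLTerm]
  · rw [symmKLTerm, log_div hx hβ]
    ring

theorem convexOn_symmKLTerm (hβ : 0 < β) : ConvexOn ℝ (Ioi 0) (symmKLTerm β) := by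
  have neg_log_convex : ConvexOn ℝ (Ioi 0) (fun x ↦ β * -log x) :=
    strictConcaveOn_log_Ioi.concaveOn.neg.smul hβ.le
  have mul_log_convex : ConvexOn ℝ (Ioi 0) (fun x ↦ x * log x) :=
    convexOn_mul_log.subset Ioi_subset_Ici_self (convex_Ioi 0)
  have linear_concave : ConcaveOn ℝ (Ioi 0) (fun x ↦ x * log β) :=
    (LinearMap.mulRight ℝ (log β)).concaveOn (convex_Ioi 0)
  exact (neg_log_convex.add (mul_log_convex.sub linear_concave)).congr
    fun x _ ↦ (symmKLTerm_eq_mul_neg_log_add hβ.ne' x).symm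

theorem continuousAt_symmKLTerm (hβ : β ≠ 0) {x : ℝ} (hx : x ≠ 0) :
    ContinuousAt (symmKLTerm β) x := by
  rw [funext (symmKLTerm_eq_mul_neg_log_add hβ)]
  fun_prop (disch := assumption)

theorem tendsto_symmKLTerm_nhdsGT_zero (hβ : 0 < β) :
    Tendsto (symmKLTerm β) (𝓝[>] 0) atTop := by
  have neg_log_tendsto : Tendsto (fun x ↦ β * -log x) (𝓝[>] 0) atTop :=
    (tendsto_neg_atBot_atTop.comp tendsto_log_nhdsGT_zero).const_mul_atTop hβ
  have rest_tendsto : Tendsto (fun x ↦ x * log x - x * log β) (𝓝[>] 0) (𝓝 0) := by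
    have rest_continuous : Continuous fun x ↦ x * log x - x * log β := by fun_prop
    exact (rest_continuous.tendsto' 0 0 (by simp)).mono_left nhdsWithin_le_nhds
  exact (neg_log_tendsto.atTop_add rest_tendsto).congr
    fun x ↦ (symmKLTerm_eq_mul_neg_log_add hβ.ne' x).symm

end SymmKLTerm

theorem f_sublevel_set_interval_general
    (b T A : ℝ) (hb : 0 < b) (hT : 0 < T) (hA : 0 < A)
    (f : ℝ → ℝ)
    (hf : ∀ x, f x = x * Real.log (x / b) - b * Real.log x -
        T * Real.log (A - x) + (A - x) * Real.log ((A - x) / T)) (c : ℝ) :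
    {x ∈ Set.Ioo (0 : ℝ) A | f x ≤ c} = ∅ ∨
      ∃ r₁ r₂ : ℝ, 0 < r₁ ∧ r₁ ≤ r₂ ∧ r₂ < A ∧
        {x ∈ Set.Ioo (0 : ℝ) A | f x ≤ c} = Set.Icc r₁ r₂ := by
  have f_eq : f = fun x ↦ symmKLTerm b x + symmKLTerm T (A - x) := by
    funext x
    rw [hf, symmKLTerm, symmKLTerm]
    ring
  have f_convex : ConvexOn ℝ (Ioo 0 A) f :=
    f_eq ▸ convexOn_Ioo_add_comp_const_sub (convexOn_symmKLTerm hb) (convexOn_symmKLTerm hT) A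
  have f_tendsto_zero : Tendsto f (𝓝[>] 0) atTop :=
    f_eq ▸ tendsto_add_comp_const_sub_nhdsGT_zero (tendsto_symmKLTerm_nhdsGT_zero hb)
      (continuousAt_symmKLTerm hT.ne' hA.ne')
  have f_tendsto_A : Tendsto f (𝓝[<] A) atTop :=
    f_eq ▸ tendsto_add_comp_const_sub_nhdsLT (continuousAt_symmKLTerm hb.ne' hA.ne')
      (tendsto_symmKLTerm_nhdsGT_zero hT)
  exact setOf_mem_Ioo_and_le_eq_empty_or_Icc f_convex.quasiconvexOn
    (f_convex.continuousOn isOpen_Ioo).lowerSemicontinuousOn f_tendsto_zero f_tendsto_A c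

/-- For every level `c`, the sublevel set `{x ∈ (0, A) : f x ≤ c}` of
`f x = x·log(x/b) − b·log x − T·log(A − x) + (A − x)·log((A − x)/T)` is either empty or a
closed bounded interval `[r₁, r₂]` with `0 < r₁ ≤ r₂ < A`. -/
theorem f_sublevel_set_interval
    (b T A : ℝ) (hb : 0 < b) (hT : 0 < T) (hA0 : 0 < A) (hA1 : A ≤ 1)
    (f : ℝ → ℝ)
    (hf : ∀ x, f x = x * Real.log (x / b) - b * Real.log x -
        T * Real.log (A - x) + (A - x) * Real.log ((A - x) / T)) :
    ∀ c : ℝ, {x ∈ Set.Ioo (0 : ℝ) A | f x ≤ c} = ∅ ∨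
      ∃ r₁ r₂ : ℝ, 0 < r₁ ∧ r₁ ≤ r₂ ∧ r₂ < A ∧
        {x ∈ Set.Ioo (0 : ℝ) A | f x ≤ c} = Set.Icc r₁ r₂ :=
  f_sublevel_set_interval_general b T A hb hT hA0 f hf
end
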